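/- Let μ be a Borel probability measure on ℝ with quantile function Q_μ, and suppose the identity function x ↦ x is integrable with respect to μ. Then Q_μ is integrable on (0,1) with respect to Lebesgue measure and ∫_{(0,1)} Q_μ(q) dq = ∫_ℝ x dμ(x). (Uniform quantile weighting recovers the expectation.) -/

import Mathlib

/-!
The quantile function is a Galois partner of the CDF: for `0 < p < 1`,
`Q_μ(p) ≤ x ↔ p ≤ F_μ(x)` (`quantileFn_le_iff`), which rests on the right-continuity of `F_μ` and
its limits `0` and `1` at `∓∞`. Hence the set of `p ∈ (0,1)` with `Q_μ(p) ≤ x` has Lebesgue measure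
`F_μ(x)`, so `Q_μ` pushes Lebesgue measure on `(0,1)` forward to `μ` (`map_quantileFn`).
Integrability and the value of the integral then follow by change of variables.
-/

open MeasureTheory Set

/-- The cumulative distribution function of a Borel measure on ℝ:
`F_μ(x) = μ((-∞, x])`. -/
noncomputable def cdfFn (μ : Measure ℝ) (x : ℝ) : ℝ := (μ (Iic x)).toReal

/-- The quantile function (generalized inverse of the CDF):
`Q_μ(p) = sInf { x | p ≤ F_μ(x) }`. -/
noncomputable def quantileFn (μ : Measure ℝ) (p : ℝ) : ℝ := sInf { x : ℝ | p ≤ cdfFn μ x }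

lemma cdfFn_eq_cdf (μ : Measure ℝ) [IsProbabilityMeasure μ] (x : ℝ) :
    cdfFn μ x = ProbabilityTheory.cdf μ x :=
  (ProbabilityTheory.cdf_eq_real μ x).symm

/-- The Galois-type relation between the quantile function and the CDF. -/
lemma quantileFn_le_iff (μ : Measure ℝ) [IsProbabilityMeasure μ] {p : ℝ} (hp : p ∈ Ioo (0:ℝ) 1)
    (x : ℝ) : quantileFn μ p ≤ x ↔ p ≤ cdfFn μ x := by
  simp only [quantileFn, cdfFn_eq_cdf]
  have hmono := ProbabilityTheory.monotone_cdf μ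
  have hne : {x : ℝ | p ≤ ProbabilityTheory.cdf μ x}.Nonempty := by
    obtain ⟨y, hy⟩ := ((ProbabilityTheory.tendsto_cdf_atTop μ).eventually_const_le hp.2).exists
    exact ⟨y, hy⟩
  have hbdd : BddBelow {x : ℝ | p ≤ ProbabilityTheory.cdf μ x} := by
    obtain ⟨y, hy⟩ := ((ProbabilityTheory.tendsto_cdf_atBot μ).eventually_lt_const hp.1).exists
    refine ⟨y, fun z hz => ?_⟩
    by_contra! h
    exact absurd (hmono h.le) (not_le.mpr (hy.trans_le hz))
  refine ⟨fun h => ?_, fun h => csInf_le hbdd h⟩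
  -- `p ≤ F y` for every `y > x`; let `y` decrease to `x`.
  have ht : Filter.Tendsto (ProbabilityTheory.cdf μ) (nhdsWithin x (Ioi x))
      (nhds (ProbabilityTheory.cdf μ x)) :=
    ((ProbabilityTheory.cdf μ).right_continuous x).mono Ioi_subset_Ici_self
  refine ge_of_tendsto ht ?_
  filter_upwards [self_mem_nhdsWithin] with y hy
  obtain ⟨s, hs, hsy⟩ := exists_lt_of_csInf_lt hne (h.trans_lt hy)
  exact le_trans hs (hmono hsy.le)

lemma aemeasurable_quantileFn (μ : Measure ℝ) [IsProbabilityMeasure μ] :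
    AEMeasurable (quantileFn μ) (volume.restrict (Ioo (0:ℝ) 1)) := by
  refine aemeasurable_restrict_of_monotoneOn measurableSet_Ioo fun p hp q hq hpq => ?_
  rw [quantileFn_le_iff μ hp]
  exact hpq.trans ((quantileFn_le_iff μ hq _).1 le_rfl)

/-- Inverse transform sampling: the quantile function of a uniform variable has law `μ`. -/
lemma map_quantileFn (μ : Measure ℝ) [IsProbabilityMeasure μ] :
    (volume.restrict (Ioo (0:ℝ) 1)).map (quantileFn μ) = μ := by
  refine Measure.ext_of_Iic _ _ fun x => ?_
  rw [Measure.map_apply_of_aemeasurable (aemeasurable_quantileFn μ) measurableSet_Iic,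
    Measure.restrict_apply' measurableSet_Ioo]
  have hset : quantileFn μ ⁻¹' Iic x ∩ Ioo (0:ℝ) 1 = Iic (cdfFn μ x) ∩ Ioo (0:ℝ) 1 := by
    ext p
    exact and_congr_left fun hp => quantileFn_le_iff μ hp x
  have hle : cdfFn μ x ≤ 1 := by
    rw [cdfFn_eq_cdf]
    exact ProbabilityTheory.cdf_le_one μ x
  -- Adding the endpoint `1`, a null set, covers the case `F x = 1`.
  have hae : volume (Iic (cdfFn μ x) ∩ Ioo (0:ℝ) 1) = volume (Iic (cdfFn μ x) ∩ Ioc (0:ℝ) 1) :=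
    measure_congr (Filter.EventuallyEq.rfl.inter Ioo_ae_eq_Ioc)
  rw [hset, hae, inter_comm, Ioc_inter_Iic, min_eq_right hle, Real.volume_Ioc, sub_zero]
  exact ENNReal.ofReal_toReal (measure_ne_top μ _)

theorem integral_quantile_eq_integral_id
    (μ : Measure ℝ) [IsProbabilityMeasure μ] (hint : Integrable (fun x : ℝ => x) μ) :
    IntegrableOn (quantileFn μ) (Ioo (0:ℝ) 1) ∧
      ∫ q in Ioo (0:ℝ) 1, quantileFn μ q = ∫ x, x ∂μ := by
  have hQ := aemeasurable_quantileFn μ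
  rw [← map_quantileFn μ] at hint
  refine ⟨(integrable_map_measure hint.aestronglyMeasurable hQ).1 hint, ?_⟩
  have h := integral_map hQ hint.aestronglyMeasurable
  rw [map_quantileFn μ] at h
  exact h.symm
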